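/- Let X, U : ℝ² → ℝ and L̄ : ℝ³ → ℝ be smooth (C^∞). Let Ω = {(x,u,p) ∈ ℝ³ : X_x(x,u) + p·X_u(x,u) ≠ 0}, let P(x,u,p) = (U_x + p·U_u)/(X_x + p·X_u) on Ω, and define L(x,u,p) := L̄(X(x,u), U(x,u), P(x,u,p)) · (X_x(x,u) + p·X_u(x,u)) on Ω. Then for all (x,u,p) ∈ Ω at which additionally U_u(x,u)·X_x(x,u) − U_x(x,u)·X_u(x,u) ≠ 0 (equivalently ∂P/∂p ≠ 0): [L̄_U − L̄_{PX} − P·L̄_{PU}] evaluated at (X(x,u), U(x,u), P(x,u,p)) equals Ẽ(L)(x,u,p)/(P_p·(X_x + p·X_u)²) + ((P_x + p·P_u)/(X_x + p·X_u)) · (∂²L/∂p²)(x,u,p)/(P_p²·(X_x + p·X_u)), where the partial derivatives P_x, P_u, P_p of P are evaluated at (x,u,p). -/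

import Mathlib

/-!
Write `A = X_x + p X_u`, `B = U_x + p U_u`, `J = U_u X_x - U_x X_u` and `D = ∂_x + p ∂_u`.
Then `D X = A`, `D U = B = P A` and `P_p = J / A²`. Differentiating `L = L̄(X, U, P) A` gives
`L_p = L̄_P J / A + L̄ X_u`, hence `L_pp = L̄_PP P_p² A`, and
`L_u - D L_p = J (L̄_U - L̄_PX - P L̄_PU - L̄_PP D P / A)`. In the last identity the terms in `L̄`
and `L̄_X` cancel directly, and the terms in `L̄_P` cancel by the symmetry of the second
derivatives of `X` and `U`. Dividing by `J = P_p A²` gives the claim.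

All derivatives are computed with the chain rule along a curve in `ℝ²` or `ℝ³`
(`hasDerivAt_curve`, `hasDerivAt_curve₃`), applied to the lines parallel to the axes. The formula
for `L_p` holds only where `A ≠ 0`, so differentiating it once more uses that this set is open.
-/

/-- Partial derivative with respect to the first variable of a function on `ℝ²`. -/
noncomputable def pdx (F : ℝ × ℝ → ℝ) (q : ℝ × ℝ) : ℝ :=
  deriv (fun t => F (t, q.2)) q.1

/-- Partial derivative with respect to the second variable of a function on `ℝ²`. -/
noncomputable def pdu (F : ℝ × ℝ → ℝ) (q : ℝ × ℝ) : ℝ :=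
  deriv (fun t => F (q.1, t)) q.2

/-- Partial derivative with respect to the first variable of a function on `ℝ³`. -/
noncomputable def pd3x (F : ℝ × ℝ × ℝ → ℝ) (w : ℝ × ℝ × ℝ) : ℝ :=
  deriv (fun t => F (t, w.2.1, w.2.2)) w.1

/-- Partial derivative with respect to the second variable of a function on `ℝ³`. -/
noncomputable def pd3u (F : ℝ × ℝ × ℝ → ℝ) (w : ℝ × ℝ × ℝ) : ℝ :=
  deriv (fun t => F (w.1, t, w.2.2)) w.2.1

/-- Partial derivative with respect to the third variable of a function on `ℝ³`. -/
noncomputable def pd3p (F : ℝ × ℝ × ℝ → ℝ) (w : ℝ × ℝ × ℝ) : ℝ :=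
  deriv (fun t => F (w.1, w.2.1, t)) w.2.2

/-- First prolongation `P(x,u,p) = (U_x + p·U_u)/(X_x + p·X_u)` of the point transformation
`(x,u) ↦ (X(x,u), U(x,u))`. -/
noncomputable def prolong (X U : ℝ × ℝ → ℝ) (w : ℝ × ℝ × ℝ) : ℝ :=
  (pdx U (w.1, w.2.1) + w.2.2 * pdu U (w.1, w.2.1)) /
    (pdx X (w.1, w.2.1) + w.2.2 * pdu X (w.1, w.2.1))

/-- The transformed Lagrangian `L(x,u,p) = L̄(X,U,P)·(X_x + p·X_u)`. -/
noncomputable def lagTransform (X U : ℝ × ℝ → ℝ) (Lb : ℝ × ℝ × ℝ → ℝ)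
    (w : ℝ × ℝ × ℝ) : ℝ :=
  Lb (X (w.1, w.2.1), U (w.1, w.2.1), prolong X U w) *
    (pdx X (w.1, w.2.1) + w.2.2 * pdu X (w.1, w.2.1))

/-- The Euler–Lagrange expression `E(L)(x,u,p,q) = L_u − L_{px} − p·L_{pu} − q·L_{pp}`. -/
noncomputable def EulerLagrange (L : ℝ × ℝ × ℝ → ℝ) (w : ℝ × ℝ × ℝ) (q : ℝ) : ℝ :=
  pd3u L w - pd3x (pd3p L) w - w.2.2 * pd3u (pd3p L) w - q * pd3p (pd3p L) w

lemma pdx_eq_fderiv {F : ℝ × ℝ → ℝ} (hF : ContDiff ℝ (⊤ : ℕ∞) F) :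
    pdx F = fun q => fderiv ℝ F q (1, 0) := by
  funext q
  have h := (hF.differentiable (by simp) q).hasFDerivAt
  exact (h.comp_hasDerivAt_of_eq q.1
    ((hasDerivAt_id q.1).prodMk (hasDerivAt_const q.1 q.2)) rfl).deriv

lemma pdu_eq_fderiv {F : ℝ × ℝ → ℝ} (hF : ContDiff ℝ (⊤ : ℕ∞) F) :
    pdu F = fun q => fderiv ℝ F q (0, 1) := by
  funext q
  have h := (hF.differentiable (by simp) q).hasFDerivAt
  exact (h.comp_hasDerivAt_of_eq q.2
    ((hasDerivAt_const q.2 q.1).prodMk (hasDerivAt_id q.2)) rfl).deriv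

lemma pd3x_eq_fderiv {F : ℝ × ℝ × ℝ → ℝ} (hF : ContDiff ℝ (⊤ : ℕ∞) F) :
    pd3x F = fun w => fderiv ℝ F w (1, 0, 0) := by
  funext w
  have h := (hF.differentiable (by simp) w).hasFDerivAt
  exact (h.comp_hasDerivAt_of_eq w.1 ((hasDerivAt_id w.1).prodMk
    ((hasDerivAt_const w.1 w.2.1).prodMk (hasDerivAt_const w.1 w.2.2))) rfl).deriv

lemma pd3u_eq_fderiv {F : ℝ × ℝ × ℝ → ℝ} (hF : ContDiff ℝ (⊤ : ℕ∞) F) :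
    pd3u F = fun w => fderiv ℝ F w (0, 1, 0) := by
  funext w
  have h := (hF.differentiable (by simp) w).hasFDerivAt
  exact (h.comp_hasDerivAt_of_eq w.2.1 ((hasDerivAt_const w.2.1 w.1).prodMk
    ((hasDerivAt_id w.2.1).prodMk (hasDerivAt_const w.2.1 w.2.2))) rfl).deriv

lemma pd3p_eq_fderiv {F : ℝ × ℝ × ℝ → ℝ} (hF : ContDiff ℝ (⊤ : ℕ∞) F) :
    pd3p F = fun w => fderiv ℝ F w (0, 0, 1) := by
  funext w
  have h := (hF.differentiable (by simp) w).hasFDerivAt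
  exact (h.comp_hasDerivAt_of_eq w.2.2 ((hasDerivAt_const w.2.2 w.1).prodMk
    ((hasDerivAt_const w.2.2 w.2.1).prodMk (hasDerivAt_id w.2.2))) rfl).deriv

lemma contDiff_pdx {F : ℝ × ℝ → ℝ} (hF : ContDiff ℝ (⊤ : ℕ∞) F) :
    ContDiff ℝ (⊤ : ℕ∞) (pdx F) := by
  rw [pdx_eq_fderiv hF]
  exact (hF.fderiv_right (by simp)).clm_apply contDiff_const

lemma contDiff_pdu {F : ℝ × ℝ → ℝ} (hF : ContDiff ℝ (⊤ : ℕ∞) F) :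
    ContDiff ℝ (⊤ : ℕ∞) (pdu F) := by
  rw [pdu_eq_fderiv hF]
  exact (hF.fderiv_right (by simp)).clm_apply contDiff_const

lemma contDiff_pd3p {F : ℝ × ℝ × ℝ → ℝ} (hF : ContDiff ℝ (⊤ : ℕ∞) F) :
    ContDiff ℝ (⊤ : ℕ∞) (pd3p F) := by
  rw [pd3p_eq_fderiv hF]
  exact (hF.fderiv_right (by simp)).clm_apply contDiff_const

lemma pdu_pdx_comm {F : ℝ × ℝ → ℝ} (hF : ContDiff ℝ (⊤ : ℕ∞) F) (q : ℝ × ℝ) :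
    pdu (pdx F) q = pdx (pdu F) q := by
  have hd : DifferentiableAt ℝ (fderiv ℝ F) q :=
    (hF.fderiv_right (m := (⊤ : ℕ∞)) (by simp)).differentiable (by simp) q
  have hs : IsSymmSndFDerivAt ℝ F q :=
    hF.contDiffAt.isSymmSndFDerivAt (by
      rw [minSmoothness_of_isRCLikeNormedField]; exact WithTop.coe_le_coe.2 le_top)
  rw [pdu_eq_fderiv (contDiff_pdx hF), pdx_eq_fderiv (contDiff_pdu hF), pdx_eq_fderiv hF,
    pdu_eq_fderiv hF]
  simp only [fderiv_clm_apply hd (differentiableAt_const _)]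
  simpa using hs.eq (0, 1) (1, 0)

/-- Chain rule for a smooth function of two variables along a curve. -/
lemma hasDerivAt_curve {F : ℝ × ℝ → ℝ} (hF : ContDiff ℝ (⊤ : ℕ∞) F) {a b : ℝ → ℝ} {a' b' t : ℝ}
    (ha : HasDerivAt a a' t) (hb : HasDerivAt b b' t) :
    HasDerivAt (fun s => F (a s, b s))
      (pdx F (a t, b t) * a' + pdu F (a t, b t) * b') t := by
  have h := (hF.differentiable (by simp) (a t, b t)).hasFDerivAt.comp_hasDerivAt t (ha.prodMk hb)
  refine h.congr_deriv ?_
  rw [pdx_eq_fderiv hF, pdu_eq_fderiv hF]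
  have e : (a', b') = a' • ((1, 0) : ℝ × ℝ) + b' • ((0, 1) : ℝ × ℝ) := by simp
  rw [e, map_add, map_smul, map_smul, smul_eq_mul, smul_eq_mul]
  ring

/-- Chain rule for a smooth function of three variables along a curve. -/
lemma hasDerivAt_curve₃ {F : ℝ × ℝ × ℝ → ℝ} (hF : ContDiff ℝ (⊤ : ℕ∞) F) {a b c : ℝ → ℝ}
    {a' b' c' t : ℝ} (ha : HasDerivAt a a' t) (hb : HasDerivAt b b' t) (hc : HasDerivAt c c' t) :
    HasDerivAt (fun s => F (a s, b s, c s))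
      (pd3x F (a t, b t, c t) * a' + pd3u F (a t, b t, c t) * b' + pd3p F (a t, b t, c t) * c')
      t := by
  have h := (hF.differentiable (by simp) (a t, b t, c t)).hasFDerivAt.comp_hasDerivAt t
    (ha.prodMk (hb.prodMk hc))
  refine h.congr_deriv ?_
  rw [pd3x_eq_fderiv hF, pd3u_eq_fderiv hF, pd3p_eq_fderiv hF]
  have e : (a', b', c') = a' • ((1, 0, 0) : ℝ × ℝ × ℝ) + b' • ((0, 1, 0) : ℝ × ℝ × ℝ)
      + c' • ((0, 0, 1) : ℝ × ℝ × ℝ) := by simp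
  rw [e, map_add, map_add, map_smul, map_smul, map_smul, smul_eq_mul, smul_eq_mul, smul_eq_mul]
  ring

/-- The total derivative `F_x + p F_u` of a function on `ℝ²`, as a function on `ℝ³`. -/
noncomputable def totalD (F : ℝ × ℝ → ℝ) (w : ℝ × ℝ × ℝ) : ℝ :=
  pdx F (w.1, w.2.1) + w.2.2 * pdu F (w.1, w.2.1)

/-- The Jacobian determinant `U_u X_x - U_x X_u`. -/
noncomputable def jac (X U : ℝ × ℝ → ℝ) (q : ℝ × ℝ) : ℝ :=
  pdu U q * pdx X q - pdx U q * pdu X q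

section Curve

variable {X U : ℝ × ℝ → ℝ} {a b c : ℝ → ℝ} {a' b' c' t : ℝ}

lemma hasDerivAt_totalD {F : ℝ × ℝ → ℝ} (hF : ContDiff ℝ (⊤ : ℕ∞) F)
    (ha : HasDerivAt a a' t) (hb : HasDerivAt b b' t) (hc : HasDerivAt c c' t) :
    HasDerivAt (fun s => totalD F (a s, b s, c s))
      (pdx (pdx F) (a t, b t) * a' + pdx (pdu F) (a t, b t) * b'
        + (c' * pdu F (a t, b t)
          + c t * (pdx (pdu F) (a t, b t) * a' + pdu (pdu F) (a t, b t) * b'))) t := by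
  rw [← pdu_pdx_comm hF]
  have h := (hasDerivAt_curve (contDiff_pdx hF) ha hb).add
    (hc.mul (hasDerivAt_curve (contDiff_pdu hF) ha hb))
  rw [← pdu_pdx_comm hF] at h
  exact h

lemma hasDerivAt_prolong {A' B' : ℝ}
    (hA : HasDerivAt (fun s => totalD X (a s, b s, c s)) A' t)
    (hB : HasDerivAt (fun s => totalD U (a s, b s, c s)) B' t)
    (h0 : totalD X (a t, b t, c t) ≠ 0) :
    HasDerivAt (fun s => prolong X U (a s, b s, c s))
      ((B' * totalD X (a t, b t, c t) - totalD U (a t, b t, c t) * A')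
        / totalD X (a t, b t, c t) ^ 2) t :=
  hB.div hA h0

/-- Chain rule for `F (X, U, P)` along a curve, in terms of the derivatives `X'`, `U'`, `P'` of the
three components along that curve. -/
lemma hasDerivAt_comp_prolong {F : ℝ × ℝ × ℝ → ℝ} (hF : ContDiff ℝ (⊤ : ℕ∞) F) {X' U' P' : ℝ}
    (hX' : HasDerivAt (fun s => X (a s, b s)) X' t)
    (hU' : HasDerivAt (fun s => U (a s, b s)) U' t)
    (hP' : HasDerivAt (fun s => prolong X U (a s, b s, c s)) P' t) :
    HasDerivAt (fun s => F (X (a s, b s), U (a s, b s), prolong X U (a s, b s, c s)))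
      (pd3x F (X (a t, b t), U (a t, b t), prolong X U (a t, b t, c t)) * X'
        + pd3u F (X (a t, b t), U (a t, b t), prolong X U (a t, b t, c t)) * U'
        + pd3p F (X (a t, b t), U (a t, b t), prolong X U (a t, b t, c t)) * P') t :=
  hasDerivAt_curve₃ hF hX' hU' hP'

lemma hasDerivAt_jac (hX : ContDiff ℝ (⊤ : ℕ∞) X) (hU : ContDiff ℝ (⊤ : ℕ∞) U)
    (ha : HasDerivAt a a' t) (hb : HasDerivAt b b' t) :
    HasDerivAt (fun s => jac X U (a s, b s))
      ((pdx (pdu U) (a t, b t) * a' + pdu (pdu U) (a t, b t) * b') * pdx X (a t, b t)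
        + pdu U (a t, b t) * (pdx (pdx X) (a t, b t) * a' + pdx (pdu X) (a t, b t) * b')
        - ((pdx (pdx U) (a t, b t) * a' + pdx (pdu U) (a t, b t) * b') * pdu X (a t, b t)
        + pdx U (a t, b t) * (pdx (pdu X) (a t, b t) * a' + pdu (pdu X) (a t, b t) * b'))) t := by
  have h := ((hasDerivAt_curve (contDiff_pdu hU) ha hb).mul
      (hasDerivAt_curve (contDiff_pdx hX) ha hb)).sub
    ((hasDerivAt_curve (contDiff_pdx hU) ha hb).mul (hasDerivAt_curve (contDiff_pdu hX) ha hb))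
  rw [pdu_pdx_comm hX, pdu_pdx_comm hU] at h
  exact h

end Curve

/-- The closed form `L̄_P J / A + L̄ X_u` of `L_p`, valid where `A = X_x + p X_u` is nonzero. -/
noncomputable def lagP (X U : ℝ × ℝ → ℝ) (Lb : ℝ × ℝ × ℝ → ℝ) (w : ℝ × ℝ × ℝ) : ℝ :=
  pd3p Lb (X (w.1, w.2.1), U (w.1, w.2.1), prolong X U w)
      * (jac X U (w.1, w.2.1) / totalD X w)
    + Lb (X (w.1, w.2.1), U (w.1, w.2.1), prolong X U w) * pdu X (w.1, w.2.1)

section Lag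

variable {X U : ℝ × ℝ → ℝ} {Lb : ℝ × ℝ × ℝ → ℝ}

lemma hasDerivAt_prolong_p (hX : ContDiff ℝ (⊤ : ℕ∞) X) (hU : ContDiff ℝ (⊤ : ℕ∞) U)
    {x u p : ℝ} (h0 : totalD X (x, u, p) ≠ 0) :
    HasDerivAt (fun s => prolong X U (x, u, s))
      (jac X U (x, u) / totalD X (x, u, p) ^ 2) p := by
  have hx := hasDerivAt_const p x
  have hu := hasDerivAt_const p u
  have hp := hasDerivAt_id p
  refine (hasDerivAt_prolong (hasDerivAt_totalD hX hx hu hp)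
    (hasDerivAt_totalD hU hx hu hp) h0).congr_deriv ?_
  simp only [totalD, jac, id]
  ring

lemma pd3p_lagTransform (hX : ContDiff ℝ (⊤ : ℕ∞) X) (hU : ContDiff ℝ (⊤ : ℕ∞) U)
    (hLb : ContDiff ℝ (⊤ : ℕ∞) Lb) {w : ℝ × ℝ × ℝ} (h0 : totalD X w ≠ 0) :
    pd3p (lagTransform X U Lb) w = lagP X U Lb w := by
  obtain ⟨x, u, p⟩ := w
  have hx := hasDerivAt_const p x
  have hu := hasDerivAt_const p u
  have hp := hasDerivAt_id p
  have h := (hasDerivAt_comp_prolong hLb (hasDerivAt_const p (X (x, u)))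
    (hasDerivAt_const p (U (x, u))) (hasDerivAt_prolong_p hX hU h0)).mul
    (hasDerivAt_totalD hX hx hu hp)
  refine h.deriv.trans ?_
  simp only [lagP, id]
  field_simp
  ring

/-- Along a curve on which `A ≠ 0` at time `t`, the functions `L_p` and `lagP` have the same
derivative at `t`. -/
lemma deriv_pd3p_lagTransform (hX : ContDiff ℝ (⊤ : ℕ∞) X) (hU : ContDiff ℝ (⊤ : ℕ∞) U)
    (hLb : ContDiff ℝ (⊤ : ℕ∞) Lb) {a b c : ℝ → ℝ} {a' b' c' t : ℝ}
    (ha : HasDerivAt a a' t) (hb : HasDerivAt b b' t) (hc : HasDerivAt c c' t)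
    (h0 : totalD X (a t, b t, c t) ≠ 0) :
    deriv (fun s => pd3p (lagTransform X U Lb) (a s, b s, c s)) t
      = deriv (fun s => lagP X U Lb (a s, b s, c s)) t := by
  refine Filter.EventuallyEq.deriv_eq ?_
  filter_upwards [(hasDerivAt_totalD hX ha hb hc).continuousAt.eventually_ne h0] with s hs
  exact pd3p_lagTransform hX hU hLb hs

/-- The derivative of `lagP` along a curve, in terms of the derivatives along that curve of the
functions it is built from. -/
lemma hasDerivAt_lagP (hLb : ContDiff ℝ (⊤ : ℕ∞) Lb) {a b c : ℝ → ℝ} {t X' U' P' A' J' V' : ℝ}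
    (hX' : HasDerivAt (fun s => X (a s, b s)) X' t)
    (hU' : HasDerivAt (fun s => U (a s, b s)) U' t)
    (hP' : HasDerivAt (fun s => prolong X U (a s, b s, c s)) P' t)
    (hA' : HasDerivAt (fun s => totalD X (a s, b s, c s)) A' t)
    (hJ' : HasDerivAt (fun s => jac X U (a s, b s)) J' t)
    (hV' : HasDerivAt (fun s => pdu X (a s, b s)) V' t)
    (h0 : totalD X (a t, b t, c t) ≠ 0) {w : ℝ × ℝ × ℝ}
    (hw : w = (X (a t, b t), U (a t, b t), prolong X U (a t, b t, c t))) :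
    HasDerivAt (fun s => lagP X U Lb (a s, b s, c s))
      ((pd3x (pd3p Lb) w * X' + pd3u (pd3p Lb) w * U' + pd3p (pd3p Lb) w * P')
          * (jac X U (a t, b t) / totalD X (a t, b t, c t))
        + pd3p Lb w * ((J' * totalD X (a t, b t, c t) - jac X U (a t, b t) * A')
            / totalD X (a t, b t, c t) ^ 2)
        + ((pd3x Lb w * X' + pd3u Lb w * U' + pd3p Lb w * P') * pdu X (a t, b t)
          + Lb w * V')) t := by
  subst hw
  exact ((hasDerivAt_comp_prolong (contDiff_pd3p hLb) hX' hU' hP').mul (hJ'.div hA' h0)).add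
    ((hasDerivAt_comp_prolong hLb hX' hU' hP').mul hV')

end Lag

/-- **Transformation law for the truncated Euler–Lagrange expression
`z = Ẽ(L) = L_u − L_{px} − p·L_{pu}` under point transformations:**
`L̄_U − L̄_{PX} − P·L̄_{PU} = Ẽ(L)/(P_p·(X_x + p·X_u)²)
  + ((P_x + p·P_u)/(X_x + p·X_u))·L_{pp}/(P_p²·(X_x + p·X_u))`. -/
theorem truncated_eulerLagrange_transform
    (X U : ℝ × ℝ → ℝ) (Lb : ℝ × ℝ × ℝ → ℝ)
    (hX : ContDiff ℝ (⊤ : ℕ∞) X) (hU : ContDiff ℝ (⊤ : ℕ∞) U) (hLb : ContDiff ℝ (⊤ : ℕ∞) Lb)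
    (x u p : ℝ) (hden : pdx X (x, u) + p * pdu X (x, u) ≠ 0)
    (hjac : pdu U (x, u) * pdx X (x, u) - pdx U (x, u) * pdu X (x, u) ≠ 0) :
    pd3u Lb (X (x, u), U (x, u), prolong X U (x, u, p)) -
        pd3x (pd3p Lb) (X (x, u), U (x, u), prolong X U (x, u, p)) -
        prolong X U (x, u, p) *
          pd3u (pd3p Lb) (X (x, u), U (x, u), prolong X U (x, u, p)) =
      (pd3u (lagTransform X U Lb) (x, u, p) -
          pd3x (pd3p (lagTransform X U Lb)) (x, u, p) -
          p * pd3u (pd3p (lagTransform X U Lb)) (x, u, p)) /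
        (pd3p (prolong X U) (x, u, p) * (pdx X (x, u) + p * pdu X (x, u)) ^ 2) +
      ((pd3x (prolong X U) (x, u, p) + p * pd3u (prolong X U) (x, u, p)) /
          (pdx X (x, u) + p * pdu X (x, u))) *
        (pd3p (pd3p (lagTransform X U Lb)) (x, u, p) /
          ((pd3p (prolong X U) (x, u, p)) ^ 2 * (pdx X (x, u) + p * pdu X (x, u)))) := by
  have h0 : totalD X (x, u, p) ≠ 0 := hden
  -- Chain rule data along the three lines through `(x, u, p)` parallel to the axes.
  have x1 := hasDerivAt_id x
  have x2 := hasDerivAt_const x u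
  have x3 := hasDerivAt_const x p
  have u1 := hasDerivAt_const u x
  have u2 := hasDerivAt_id u
  have u3 := hasDerivAt_const u p
  have p1 := hasDerivAt_const p x
  have p2 := hasDerivAt_const p u
  have p3 := hasDerivAt_id p
  have Ax := hasDerivAt_totalD hX x1 x2 x3
  have Au := hasDerivAt_totalD hX u1 u2 u3
  have Ap := hasDerivAt_totalD hX p1 p2 p3
  have Px := hasDerivAt_prolong Ax (hasDerivAt_totalD hU x1 x2 x3) h0
  have Pu := hasDerivAt_prolong Au (hasDerivAt_totalD hU u1 u2 u3) h0
  have Pp := hasDerivAt_prolong_p hX hU h0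
  have Lu := (hasDerivAt_comp_prolong hLb (hasDerivAt_curve hX u1 u2) (hasDerivAt_curve hU u1 u2)
    Pu).mul Au
  have Lpx := hasDerivAt_lagP hLb (hasDerivAt_curve hX x1 x2) (hasDerivAt_curve hU x1 x2) Px Ax
    (hasDerivAt_jac hX hU x1 x2) (hasDerivAt_curve (contDiff_pdu hX) x1 x2) h0 rfl
  have Lpu := hasDerivAt_lagP hLb (hasDerivAt_curve hX u1 u2) (hasDerivAt_curve hU u1 u2) Pu Au
    (hasDerivAt_jac hX hU u1 u2) (hasDerivAt_curve (contDiff_pdu hX) u1 u2) h0 rfl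
  have Lpp := hasDerivAt_lagP hLb (hasDerivAt_const p (X (x, u))) (hasDerivAt_const p (U (x, u)))
    Pp Ap (hasDerivAt_const p (jac X U (x, u))) (hasDerivAt_const p (pdu X (x, u))) h0 rfl
  have eLu : pd3u (lagTransform X U Lb) (x, u, p) = _ := Lu.deriv
  have eLpx : pd3x (pd3p (lagTransform X U Lb)) (x, u, p) = _ :=
    (deriv_pd3p_lagTransform hX hU hLb x1 x2 x3 h0).trans Lpx.deriv
  have eLpu : pd3u (pd3p (lagTransform X U Lb)) (x, u, p) = _ :=
    (deriv_pd3p_lagTransform hX hU hLb u1 u2 u3 h0).trans Lpu.deriv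
  have eLpp : pd3p (pd3p (lagTransform X U Lb)) (x, u, p) = _ :=
    (deriv_pd3p_lagTransform hX hU hLb p1 p2 p3 h0).trans Lpp.deriv
  have ePx : pd3x (prolong X U) (x, u, p) = _ := Px.deriv
  have ePu : pd3u (prolong X U) (x, u, p) = _ := Pu.deriv
  have ePp : pd3p (prolong X U) (x, u, p) = _ := Pp.deriv
  rw [eLu, eLpx, eLpu, eLpp, ePx, ePu, ePp]
  have eP : prolong X U (x, u, p) =
    (pdx U (x, u) + p * pdu U (x, u)) / (pdx X (x, u) + p * pdu X (x, u)) := rfl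
  simp only [id]
  generalize (X (x, u), U (x, u), prolong X U (x, u, p)) = w
  rw [eP]
  simp only [totalD, jac]
  -- What remains is an identity of rational functions in the partial derivatives. Naming `A` and
  -- `J` and eliminating `X_x` keeps the denominators monomial.
  generalize pdx (pdx X) (x, u) = Xxx
  generalize pdx (pdu X) (x, u) = Xxu
  generalize pdu (pdu X) (x, u) = Xuu
  generalize pdx (pdx U) (x, u) = Uxx
  generalize pdx (pdu U) (x, u) = Uxu
  generalize pdu (pdu U) (x, u) = Uuu
  generalize pdx X (x, u) = Xx at *
  generalize pdu X (x, u) = Xu at *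
  generalize pdx U (x, u) = Ux at *
  generalize pdu U (x, u) = Uu at *
  obtain ⟨A, hA⟩ : ∃ A, A = Xx + p * Xu := ⟨_, rfl⟩
  obtain ⟨J, hJ⟩ : ∃ J, J = Uu * Xx - Ux * Xu := ⟨_, rfl⟩
  rw [← hA] at hden
  rw [← hJ] at hjac
  simp only [← hA, ← hJ]
  field_simp
  obtain rfl : Xx = A - p * Xu := by rw [hA]; ring
  subst hJ
  ring
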